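/- Let X and Z be independent Expo(λ) random variables, let a ∈ ℝ, and let c ∈ ℝ with a ≤ c. Define V := a + X if a + X < c, and V := c + Z if a + X ≥ c. Then V has the same distribution as a + X; that is, the law of V is the pushforward of Expo(λ) under the map x ↦ a + x. -/

import Mathlib

open MeasureTheory ProbabilityTheory Real

/-- Let `X` and `Z` be independent `Expo(lam)` random variables and `a ≤ c`. The random variable
`V`, equal to `a + X` if `a + X < c` and to `c + Z` otherwise, has the same distribution as
`a + X` (memorylessness of the exponential distribution). -/
theorem shifted_exponential_restart
    (lam : ℝ) (hlam : 0 < lam) (a c : ℝ) (hac : a ≤ c) :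
    Measure.map (fun w : ℝ × ℝ => if a + w.1 < c then a + w.1 else c + w.2)
        ((expMeasure lam).prod (expMeasure lam))
      = Measure.map (fun x : ℝ => a + x) (expMeasure lam) := by
  have hP : IsProbabilityMeasure (expMeasure lam) := isProbabilityMeasure_expMeasure hlam
  have hcdf : ∀ x, (expMeasure lam).real (Set.Iic x)
      = if 0 ≤ x then 1 - exp (-(lam * x)) else 0 := fun x => by
    rw [← cdf_expMeasure_eq hlam, cdf_eq_real]
  have hatom : ∀ x, expMeasure lam {x} = 0 := fun x =>
    (withDensity_absolutelyContinuous volume (gammaPDF 1 lam)) (by simp)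
  have hIio : ∀ x, (expMeasure lam).real (Set.Iio x) = (expMeasure lam).real (Set.Iic x) := by
    have : NullSingletonClass (expMeasure lam) := ⟨hatom⟩
    exact fun x => measureReal_congr Iio_ae_eq_Iic
  have hm : Measurable (fun w : ℝ × ℝ => if a + w.1 < c then a + w.1 else c + w.2) :=
    Measurable.ite (measurableSet_lt (by fun_prop) (by fun_prop)) (by fun_prop) (by fun_prop)
  have hm2 : Measurable (fun x : ℝ => a + x) := by fun_prop
  have := Measure.isProbabilityMeasure_map
    (μ := (expMeasure lam).prod (expMeasure lam)) hm.aemeasurable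
  have := Measure.isProbabilityMeasure_map (μ := expMeasure lam) hm2.aemeasurable
  refine Measure.ext_of_Iic _ _ fun t => ?_
  rw [← measureReal_eq_measureReal_iff, map_measureReal_apply hm measurableSet_Iic,
    map_measureReal_apply hm2 measurableSet_Iic]
  have h1 : (fun w : ℝ × ℝ => if a + w.1 < c then a + w.1 else c + w.2) ⁻¹' Set.Iic t
      = (Set.Iio (c - a) ∩ Set.Iic (t - a)) ×ˢ Set.univ
        ∪ (Set.Iio (c - a))ᶜ ×ˢ Set.Iic (t - c) := by
    ext ⟨x, z⟩
    by_cases h : a + x < c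
    · have h' : x < c - a := by linarith
      simp [h, h', not_le.2 h', le_sub_iff_add_le, add_comm]
    · have h' : ¬ x < c - a := by intro; apply h; linarith
      simp [h, h', not_lt.1 h', le_sub_iff_add_le, add_comm]
  have h2 : (fun x : ℝ => a + x) ⁻¹' Set.Iic t = Set.Iic (t - a) := by
    ext x
    simp [le_sub_iff_add_le, add_comm]
  rw [h1, h2, measureReal_union _ (measurableSet_Iio.compl.prod measurableSet_Iic),
    measureReal_prod_prod, measureReal_prod_prod, probReal_univ, mul_one,
    probReal_compl_eq_one_sub measurableSet_Iio]
  · rcases lt_or_ge t c with h | h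
    · rw [Set.inter_eq_right.2 (fun x hx => ?_), hcdf (t - c), if_neg (by linarith)]
      · simp
      · simp only [Set.mem_Iic, Set.mem_Iio] at *; linarith
    · rw [Set.inter_eq_left.2 (fun x hx => ?_), hIio, hcdf, hcdf, hcdf, if_pos (by linarith),
        if_pos (by linarith), if_pos (by linarith)]
      · have : exp (-(lam * (t - a))) = exp (-(lam * (c - a))) * exp (-(lam * (t - c))) := by
          rw [← exp_add]; ring_nf
        rw [this]; ring
      · simp only [Set.mem_Iic, Set.mem_Iio] at *; linarith
  · rw [Set.disjoint_left]
    rintro ⟨x, z⟩ h h'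
    exact h'.1 h.1.1
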